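/- For all real θ₁, θ₂ with |4cos 2θ₂ + 8cos 3θ₁ cos θ₂ − 3| < 9, the point (X₁, X₂) = (12 sin 3θ₁ cos θ₂, 4 sin 2θ₂ + 4 cos 3θ₁ sin θ₂)/√(81 − (4cos 2θ₂ + 8cos 3θ₁ cos θ₂ − 3)²) satisfies X₁² + 3X₂² ≤ 2. -/

import Mathlib

/-!
Put `x = 2θ₂`, `y = 3θ₁ - θ₂`, `z = -3θ₁ - θ₂`, so that `x + y + z = 0`, and let `S` and `T` be the
sums of the cosines and of the sines of `x, y, z`. The quantity under the root is
`81 - (4S - 3)² = 8(3 - S)(3 + 2S)`, and the quadratic form `X₁² + 3X₂²` has numerator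
`24((sin x - sin y)² + (sin y - sin z)² + (sin z - sin x)²) = 12(9 + 6S - 3S² + T²)`. The claim thus
amounts to `3T² ≤ (3 - S)²`: the deltoid traced by `S + iT` lies in the triangle spanned by its
cusps. This in turn is `cos A + cos B + cos C ≤ 3/2` for `A + B + C = π`, applied to the angles
`π/3 ± x`, `π/3 ± y`, `π/3 ± z`.
-/

section ThreeAngles

open Real

variable {x y z : ℝ}

lemma cos_add_cos_add_cos_le_of_add_eq_pi (h : x + y + z = π) :
    cos x + cos y + cos z ≤ 3 / 2 := by
  have cos_z : cos z = sin x * sin y - cos x * cos y := by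
    rw [show z = π - (x + y) by linarith, cos_pi_sub, cos_add, neg_sub]
  have expand : (1 - cos x - cos y) ^ 2 + (sin x - sin y) ^ 2
      = 3 - 2 * (cos x + cos y + cos z) := by
    linear_combination sin_sq_add_cos_sq x + sin_sq_add_cos_sq y + 2 * cos_z
  linarith [sq_nonneg (1 - cos x - cos y), sq_nonneg (sin x - sin y)]

lemma two_mul_cos_pi_div_three_sub (t : ℝ) : 2 * cos (π / 3 - t) = cos t + √3 * sin t := by
  rw [cos_sub, cos_pi_div_three, sin_pi_div_three]
  ring

lemma sqrt_three_mul_sum_sin_le (h : x + y + z = 0) :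
    √3 * (sin x + sin y + sin z) ≤ 3 - (cos x + cos y + cos z) := by
  have triangle := cos_add_cos_add_cos_le_of_add_eq_pi
    (show (π / 3 - x) + (π / 3 - y) + (π / 3 - z) = π by linarith)
  linarith [two_mul_cos_pi_div_three_sub x, two_mul_cos_pi_div_three_sub y,
    two_mul_cos_pi_div_three_sub z]

lemma three_mul_sum_sin_sq_le (h : x + y + z = 0) :
    3 * (sin x + sin y + sin z) ^ 2 ≤ (3 - (cos x + cos y + cos z)) ^ 2 := by
  have upper := sqrt_three_mul_sum_sin_le h
  have lower := sqrt_three_mul_sum_sin_le (show -x + -y + -z = 0 by linarith)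
  simp only [sin_neg, cos_neg] at lower
  calc 3 * (sin x + sin y + sin z) ^ 2
      = (√3 * (sin x + sin y + sin z)) ^ 2 := by rw [mul_pow, sq_sqrt zero_le_three]
    _ ≤ (3 - (cos x + cos y + cos z)) ^ 2 := sq_le_sq' (by linarith) upper

lemma sum_sin_sub_sin_sq (h : x + y + z = 0) :
    2 * ((sin x - sin y) ^ 2 + (sin y - sin z) ^ 2 + (sin z - sin x) ^ 2)
      = 9 + 6 * (cos x + cos y + cos z) - 3 * (cos x + cos y + cos z) ^ 2
        + (sin x + sin y + sin z) ^ 2 := by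
  have cos_third {a b c : ℝ} (habc : a + b + c = 0) :
      cos c = cos a * cos b - sin a * sin b := by
    rw [← cos_add, ← cos_neg, show -c = a + b by linarith]
  linear_combination
    3 * (sin_sq_add_cos_sq x + sin_sq_add_cos_sq y + sin_sq_add_cos_sq z)
      - 6 * (cos_third h + cos_third (show y + z + x = 0 by linarith)
        + cos_third (show z + x + y = 0 by linarith))

lemma three_mul_sum_sin_sub_sin_sq_le (h : x + y + z = 0) :
    3 * ((sin x - sin y) ^ 2 + (sin y - sin z) ^ 2 + (sin z - sin x) ^ 2)
      ≤ 2 * (3 - (cos x + cos y + cos z)) * (3 + 2 * (cos x + cos y + cos z)) := by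
  linarith [three_mul_sum_sin_sq_le h, sum_sin_sub_sin_sq h]

lemma hexagonal_numerator_le (α θ : ℝ) :
    (12 * sin α * cos θ) ^ 2 + 3 * (4 * sin (2 * θ) + 4 * cos α * sin θ) ^ 2
      ≤ 2 * (81 - (4 * cos (2 * θ) + 8 * cos α * cos θ - 3) ^ 2) := by
  have sum_cos : cos (2 * θ) + cos (α - θ) + cos (-(α + θ)) = cos (2 * θ) + 2 * cos α * cos θ := by
    rw [cos_neg, cos_sub, cos_add]
    ring
  have numerator_eq : (12 * sin α * cos θ) ^ 2 + 3 * (4 * sin (2 * θ) + 4 * cos α * sin θ) ^ 2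
      = 24 * ((sin (2 * θ) - sin (α - θ)) ^ 2 + (sin (α - θ) - sin (-(α + θ))) ^ 2
        + (sin (-(α + θ)) - sin (2 * θ)) ^ 2) := by
    rw [sin_neg, sin_sub, sin_add]
    ring
  have bound := three_mul_sum_sin_sub_sin_sq_le
    (show 2 * θ + (α - θ) + -(α + θ) = 0 by ring)
  rw [sum_cos] at bound
  rw [numerator_eq]
  linarith

end ThreeAngles

/-- The parameterization of the region of polynomial decay of the hexagonal quantum
walk lies within the ellipse `X₁² + 3X₂² ≤ 2`. -/
theorem hexagonal_decay_region_in_ellipse (θ₁ θ₂ : ℝ)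
    (h : |4 * Real.cos (2 * θ₂) + 8 * Real.cos (3 * θ₁) * Real.cos θ₂ - 3| < 9) :
    let D := Real.sqrt (81 -
      (4 * Real.cos (2 * θ₂) + 8 * Real.cos (3 * θ₁) * Real.cos θ₂ - 3) ^ 2)
    let X₁ := 12 * Real.sin (3 * θ₁) * Real.cos θ₂ / D
    let X₂ := (4 * Real.sin (2 * θ₂) + 4 * Real.cos (3 * θ₁) * Real.sin θ₂) / D
    X₁ ^ 2 + 3 * X₂ ^ 2 ≤ 2 := by
  intro D X₁ X₂
  have radicand_pos : 0 < 81 -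
      (4 * Real.cos (2 * θ₂) + 8 * Real.cos (3 * θ₁) * Real.cos θ₂ - 3) ^ 2 := by
    linarith [sq_lt_sq' (abs_lt.mp h).1 (abs_lt.mp h).2]
  calc X₁ ^ 2 + 3 * X₂ ^ 2
      = ((12 * Real.sin (3 * θ₁) * Real.cos θ₂) ^ 2
          + 3 * (4 * Real.sin (2 * θ₂) + 4 * Real.cos (3 * θ₁) * Real.sin θ₂) ^ 2) / D ^ 2 := by
        ring
    _ ≤ 2 := by
        rw [Real.sq_sqrt radicand_pos.le, div_le_iff₀ radicand_pos]
        exact hexagonal_numerator_le (3 * θ₁) θ₂
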